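/- There exists a nontrivial symmetric (45, 12, 3) design 𝒟 on a 45-element point set 𝒫 together with a group G of automorphisms of 𝒟 of order 3240 such that G is flag-transitive and point-imprimitive: G acts transitively on the flags of 𝒟 and leaves invariant a nontrivial partition of 𝒫 into 5 classes of size 9. -/

import Mathlib

/-- A symmetric `(v, k, λ)` design: a finite set of `v` points together with a family of
`v` blocks, each block a `k`-element subset of the points, such that every point lies in
exactly `k` blocks and any two distinct points lie in exactly `λ` common blocks. -/
structure SymmetricDesign (P : Type) [Fintype P] [DecidableEq P] (v k lam : ℕ) where
  blocks : Finset (Finset P)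
  card_points : Fintype.card P = v
  card_blocks : blocks.card = v
  block_size : ∀ b ∈ blocks, b.card = k
  point_count : ∀ p : P, (blocks.filter fun b => p ∈ b).card = k
  pair_count : ∀ p q : P, p ≠ q →
    (blocks.filter fun b => p ∈ b ∧ q ∈ b).card = lam

/-- `G` is a group of automorphisms of the design `D`: every element of `G` maps blocks
to blocks. -/
def IsAutGroup {P : Type} [Fintype P] [DecidableEq P] {v k lam : ℕ}
    (D : SymmetricDesign P v k lam) (G : Subgroup (Equiv.Perm P)) : Prop :=
  ∀ g ∈ G, ∀ b ∈ D.blocks, b.image (g : P → P) ∈ D.blocks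

/-- `G` is flag-transitive on `D`: it acts transitively on incident point-block pairs. -/
def FlagTransitive {P : Type} [Fintype P] [DecidableEq P] {v k lam : ℕ}
    (D : SymmetricDesign P v k lam) (G : Subgroup (Equiv.Perm P)) : Prop :=
  ∀ p₁ p₂ : P, ∀ b₁ b₂ : Finset P, b₁ ∈ D.blocks → b₂ ∈ D.blocks →
    p₁ ∈ b₁ → p₂ ∈ b₂ → ∃ g ∈ G, g p₁ = p₂ ∧ b₁.image (g : P → P) = b₂

namespace Design45

/-- The field of order nine as a vector space over its prime field. -/
abbrev Plane := ZMod 3 × ZMod 3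

/-- Five copies of the affine plane of order three. -/
abbrev Pt := ZMod 5 × Plane

/-- Multiplication by a primitive element `ζ` with `ζ ^ 2 = ζ + 1`, in the basis `1, ζ`. -/
def zeta (x : Plane) : Plane := (x.2, x.1 + x.2)

/-- The word with first two entries `s.1`, `s.2` of a cyclic additive code of length five
over the field of order nine. -/
def codeword (s : Plane × Plane) : ZMod 5 → Plane :=
  ![s.1, s.2,
    (s.1.2 + s.2.1, -s.1.1 - s.2.1 + s.2.2),
    (s.1.2 + s.2.1 + s.2.2, -s.1.1 - s.1.2 + s.2.2),
    (-s.1.1 + s.1.2 - s.2.2, -s.1.1 + s.2.1)]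

/-- Translation by a codeword. -/
def trans (s : Plane × Plane) (q : Pt) : Pt := (q.1, q.2 + codeword s q.1)

/-- Rotation of the five planes. -/
def rot (j : ZMod 5) (q : Pt) : Pt := (q.1 + j, q.2)

/-- The doubling map on indices combined with multiplication by `ζ`. -/
def twist (q : Pt) : Pt := (2 * q.1, zeta q.2)

/-- The linear form whose level sets are the lines in which blocks meet the plane at
index difference `d`. -/
def form (d : ZMod 5) (x : Plane) : ZMod 3 :=
  (![0, x.1, -x.1 + x.2, -x.2, -x.1 - x.2] : Fin 5 → ZMod 3) d

/-- The tetracode, with positions indexed by the nonzero residues modulo five. -/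
def tetra (y : Plane) (d : ZMod 5) : ZMod 3 :=
  (![0, y.1, y.2, y.1 - y.2, y.1 + y.2] : Fin 5 → ZMod 3) d

/-- Incidence between the block labelled `b` and the point `q`. -/
def Inc (b q : Pt) : Prop :=
  q.1 ≠ b.1 ∧ form (q.1 - b.1) q.2 = tetra b.2 (q.1 - b.1)

instance : DecidableRel Inc := fun _ _ => inferInstanceAs (Decidable (_ ∧ _))

/-- The tetracode word induced by a codeword, seen from index `i`. -/
def shadow (s : Plane × Plane) (i : ZMod 5) : Plane :=
  (form 1 (codeword s (i + 1)), form 2 (codeword s (i + 2)))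

/-- The action of `trans s` on block labels. -/
def blockTrans (s : Plane × Plane) (b : Pt) : Pt := (b.1, b.2 + shadow s b.1)

/-- The action of `twist` on block labels. -/
def blockTwist (b : Pt) : Pt := (2 * b.1, (b.2.2 - b.2.1, b.2.1))

theorem form_add (d : ZMod 5) (x y : Plane) : form d (x + y) = form d x + form d y := by
  revert d x y; decide +kernel

theorem tetra_add (d : ZMod 5) (x y : Plane) : tetra (x + y) d = tetra x d + tetra y d := by
  revert d x y; decide +kernel

theorem codeword_add (s t : Plane × Plane) (i : ZMod 5) :
    codeword (s + t) i = codeword s i + codeword t i := by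
  change Fin 5 at i
  fin_cases i <;> ext <;> simp [codeword] <;> ring

theorem form_codeword (s : Plane × Plane) (i d : ZMod 5) (hd : d ≠ 0) :
    form d (codeword s (i + d)) = tetra (shadow s i) d := by
  revert s i d; decide +kernel

theorem inc_trans (s : Plane × Plane) (b q : Pt) :
    Inc (blockTrans s b) (trans s q) ↔ Inc b q := by
  refine and_congr_right fun h => ?_
  have key := form_codeword s b.1 (q.1 - b.1) (sub_ne_zero.2 h)
  rw [add_sub_cancel] at key
  simp only [trans, blockTrans] at *
  rw [form_add, tetra_add, key, add_left_inj]

theorem inc_rot (j : ZMod 5) (b q : Pt) : Inc (rot j b) (rot j q) ↔ Inc b q := by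
  simp [Inc, rot]

theorem form_twist_eq_iff (d : ZMod 5) (x y : Plane) :
    form (2 * d) (zeta x) = tetra (y.2 - y.1, y.1) (2 * d) ↔ form d x = tetra y d := by
  revert d x y; decide +kernel

theorem two_mul_inj (i j : ZMod 5) : 2 * i = 2 * j ↔ i = j := by
  revert i j; decide

theorem inc_twist (b q : Pt) : Inc (blockTwist b) (twist q) ↔ Inc b q := by
  have h : 2 * q.1 - 2 * b.1 = 2 * (q.1 - b.1) := by ring
  simp only [Inc, blockTwist, twist, h, form_twist_eq_iff, ne_eq, two_mul_inj]

/-- The general element of the group acting on points. -/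
def act (s : Plane × Plane) (j : ZMod 5) (k : ℕ) (q : Pt) : Pt :=
  trans s (rot j (twist^[k] q))

/-- The general element of the group acting on block labels. -/
def blockAct (s : Plane × Plane) (j : ZMod 5) (k : ℕ) (b : Pt) : Pt :=
  blockTrans s (rot j (blockTwist^[k] b))

theorem inc_act (s : Plane × Plane) (j : ZMod 5) (k : ℕ) (b q : Pt) :
    Inc (blockAct s j k b) (act s j k q) ↔ Inc b q := by
  rw [act, blockAct, inc_trans, inc_rot]
  induction k with
  | zero => rfl
  | succ k ih => rw [Function.iterate_succ_apply', Function.iterate_succ_apply', inc_twist, ih]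

theorem trans_trans (s t : Plane × Plane) (q : Pt) : trans s (trans t q) = trans (t + s) q := by
  simp [trans, codeword_add, add_assoc]

theorem rot_rot (i j : ZMod 5) (q : Pt) : rot i (rot j q) = rot (j + i) q := by
  simp [rot, add_assoc]

theorem codeword_shift (s : Plane × Plane) (j i : ZMod 5) :
    codeword (codeword s (-j), codeword s (1 - j)) (i + j) = codeword s i := by
  revert s j i; decide +kernel

theorem rot_trans (j : ZMod 5) (s : Plane × Plane) (q : Pt) :
    rot j (trans s q) = trans (codeword s (-j), codeword s (1 - j)) (rot j q) := by
  rw [rot, trans, trans, rot, codeword_shift]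

theorem twist_trans (s : Plane × Plane) (q : Pt) :
    twist (trans s q) = trans (zeta s.1, zeta (codeword s 3)) (twist q) := by
  have hadd : ∀ x y : Plane, zeta (x + y) = zeta x + zeta y := by decide
  have hcode : ∀ (s : Plane × Plane) (i : ZMod 5),
      zeta (codeword s i) = codeword (zeta s.1, zeta (codeword s 3)) (2 * i) := by
    decide +kernel
  rw [trans, twist, hadd, hcode, twist, trans]

theorem twist_rot (j : ZMod 5) (q : Pt) : twist (rot j q) = rot (2 * j) (twist q) := by
  simp [twist, rot, mul_add]

theorem twist_act (s : Plane × Plane) (j : ZMod 5) (k : ℕ) :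
    ∃ s', ∀ q, twist (act s j k q) = act s' (2 * j) (k + 1) q :=
  ⟨_, fun q => by
    rw [act, twist_trans, twist_rot, act, Function.iterate_succ_apply']⟩

theorem iterate_twist_act (m : ℕ) (s : Plane × Plane) (j : ZMod 5) (k : ℕ) :
    ∃ s' j' k', ∀ q, twist^[m] (act s j k q) = act s' j' k' q := by
  induction m with
  | zero => exact ⟨s, j, k, fun _ => rfl⟩
  | succ m ih =>
    obtain ⟨s', j', k', h⟩ := ih
    obtain ⟨s'', h'⟩ := twist_act s' j' k'
    exact ⟨s'', _, _, fun q => by rw [Function.iterate_succ_apply', h, h']⟩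

theorem act_act (s t : Plane × Plane) (i j : ZMod 5) (m n : ℕ) :
    ∃ s' j' k', ∀ q, act s i m (act t j n q) = act s' j' k' q := by
  obtain ⟨s', j', k', h⟩ := iterate_twist_act m t j n
  refine ⟨(codeword s' (-i), codeword s' (1 - i)) + s, j' + i, k', fun q => ?_⟩
  rw [act, h, act, rot_trans, trans_trans, rot_rot, act]

theorem twist_iterate_eight (q : Pt) : twist^[8] q = q := by
  revert q; decide +kernel

theorem act_mod_eight (s : Plane × Plane) (j : ZMod 5) (k : ℕ) (q : Pt) :
    act s j (k % 8) q = act s j k q := by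
  have h : Function.IsPeriodicPt twist 8 q := twist_iterate_eight q
  rw [act, act, h.iterate_mod_apply]

theorem act_injective (s : Plane × Plane) (j : ZMod 5) (k : ℕ) :
    Function.Injective (act s j k) := by
  have htrans : Function.Injective (trans s) := fun p q h => by
    simp only [trans, Prod.mk.injEq] at h
    exact Prod.ext h.1 (add_right_cancel (h.1 ▸ h.2))
  have hrot : Function.Injective (rot j) := fun p q h => by
    simpa [rot, Prod.ext_iff] using h
  have htwist : Function.Injective twist :=
    Function.LeftInverse.injective (g := twist^[7]) twist_iterate_eight
  exact htrans.comp (hrot.comp (htwist.iterate k))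

theorem act_param_injective {s t : Plane × Plane} {i j : ZMod 5} {m n : Fin 8}
    (h : ∀ q, act s i m q = act t j n q) : s = t ∧ i = j ∧ m = n := by
  have hindex : ∀ (m : Fin 8) (x : Plane), (twist^[(m : ℕ)] (0, x)).1 = 0 := by decide +kernel
  have hij : i = j := by
    have := congrArg Prod.fst (h (0, 0))
    simpa [act, trans, rot, hindex] using this
  subst hij
  have hzero : ∀ m : Fin 8, (twist^[(m : ℕ)] (0, 0)).2 = 0 := by decide +kernel
  have hone : ∀ m n : Fin 8, (twist^[(m : ℕ)] (0, (1, 0))).2 = (twist^[(n : ℕ)] (0, (1, 0))).2 →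
      m = n := by decide +kernel
  have hcode : codeword s i = codeword t i := by
    have := congrArg Prod.snd (h (0, 0))
    simpa [act, trans, rot, hindex, hzero] using this
  have hmn : m = n := by
    have := congrArg Prod.snd (h (0, (1, 0)))
    simp only [act, trans, rot, hindex, zero_add, hcode] at this
    exact hone m n (add_right_cancel this)
  subst hmn
  refine ⟨?_, rfl, rfl⟩
  have hsurj : ∀ p : Pt, ∃ q, rot i (twist^[(m : ℕ)] q) = p := fun p =>
    (Finite.injective_iff_surjective.1 (act_injective 0 i m)) p |>.imp fun q hq => by
      have hz : ∀ p, trans 0 p = p := by decide +kernel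
      rwa [act, hz] at hq
  have hword : ∀ l, codeword s l = codeword t l := fun l => by
    obtain ⟨q, hq⟩ := hsurj (l, 0)
    have := congrArg Prod.snd (h q)
    simpa [act, hq, trans] using this
  exact Prod.ext (hword 0) (hword 1)

theorem exists_two_pow (d : ZMod 5) (hd : d ≠ 0) :
    ∃ k : Fin 4, twist^[(k : ℕ)] (1, 0) = (d, 0) ∧ blockTwist^[(k : ℕ)] (0, 0) = (0, 0) := by
  revert d; decide +kernel

theorem exists_codeword (i d : ZMod 5) (x y : Plane) (hd : d ≠ 0)
    (h : form d x = tetra y d) : ∃ s, codeword s (d + i) = x ∧ shadow s i = y := by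
  revert i d x y; decide +kernel

theorem exists_act_of_inc (b q : Pt) (h : Inc b q) :
    ∃ s j k, act s j k (1, 0) = q ∧ blockAct s j k (0, 0) = b := by
  have hd := sub_ne_zero.2 h.1
  obtain ⟨k, hk, hk'⟩ := exists_two_pow _ hd
  obtain ⟨s, hs, hs'⟩ := exists_codeword b.1 _ _ _ hd h.2
  refine ⟨s, b.1, k, ?_, ?_⟩
  · rw [act, hk]
    rw [sub_add_cancel] at hs
    simp [rot, trans, hs]
  · rw [blockAct, hk']
    simp [rot, blockTrans, hs']

theorem card_inc_left (b : Pt) : (Finset.univ.filter fun q => Inc b q).card = 12 := by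
  revert b; decide +kernel

theorem card_inc_right (q : Pt) : (Finset.univ.filter fun b => Inc b q).card = 12 := by
  revert q; decide +kernel

theorem card_inc_pair (p q : Pt) (h : p ≠ q) :
    (Finset.univ.filter fun b => Inc b p ∧ Inc b q).card = 3 := by
  revert p q; decide +kernel

theorem inc_ext (b b' : Pt) (h : ∀ q, Inc b q ↔ Inc b' q) : b = b' := by
  revert b b'; decide +kernel

/-- A labelling of the points. -/
noncomputable def label : Fin 45 ≃ Pt := (Fintype.equivFinOfCardEq (by simp)).symm

/-- The block with a given label. -/
noncomputable def block (b : Pt) : Finset (Fin 45) := Finset.univ.filter fun x => Inc b (label x)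

theorem mem_block {b : Pt} {x : Fin 45} : x ∈ block b ↔ Inc b (label x) := by simp [block]

theorem block_injective : Function.Injective block := fun b b' h =>
  inc_ext b b' fun q => by
    simpa [mem_block] using Finset.ext_iff.1 h (label.symm q)

theorem card_filter_blocks (p : Finset (Fin 45) → Prop) [DecidablePred p] :
    ((Finset.univ.image block).filter p).card = (Finset.univ.filter fun b => p (block b)).card := by
  rw [Finset.filter_image, Finset.card_image_of_injective _ block_injective]

/-- The symmetric `(45, 12, 3)` design. -/
noncomputable def design : SymmetricDesign (Fin 45) 45 12 3 where
  blocks := Finset.univ.image block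
  card_points := rfl
  card_blocks := by rw [Finset.card_image_of_injective _ block_injective]; rfl
  block_size := by
    intro b hb
    obtain ⟨b, -, rfl⟩ := Finset.mem_image.1 hb
    rw [← card_inc_left b]
    exact Finset.card_equiv label fun x => by simp [mem_block]
  point_count p := by simp only [card_filter_blocks, mem_block, card_inc_right]
  pair_count p q h := by
    simp only [card_filter_blocks, mem_block, card_inc_pair _ _ (label.injective.ne h)]

theorem mem_blocks {B : Finset (Fin 45)} : B ∈ design.blocks ↔ ∃ b, block b = B := by
  simp [design]

/-- The permutation of points given by a general group element. -/
noncomputable def perm (s : Plane × Plane) (j : ZMod 5) (k : ℕ) : Equiv.Perm (Fin 45) :=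
  label.trans ((Equiv.ofBijective _ (Finite.injective_iff_bijective.1 (act_injective s j k))).trans
    label.symm)

theorem label_perm (s : Plane × Plane) (j : ZMod 5) (k : ℕ) (x : Fin 45) :
    label (perm s j k x) = act s j k (label x) := by simp [perm]

/-- The group elements as a submonoid. -/
noncomputable def monoid : Submonoid (Equiv.Perm (Fin 45)) where
  carrier := {g | ∃ s j k, g = perm s j k}
  one_mem' := ⟨0, 0, 0, Equiv.ext fun x => label.injective <| by
    have h : ∀ q, act 0 0 0 q = q := by decide +kernel
    rw [label_perm, h]; rfl⟩
  mul_mem' := by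
    rintro _ _ ⟨s, i, m, rfl⟩ ⟨t, j, n, rfl⟩
    obtain ⟨s', j', k', h⟩ := act_act s t i j m n
    exact ⟨s', j', k', Equiv.ext fun x => label.injective <| by
      rw [Equiv.Perm.mul_apply, label_perm, label_perm, h, label_perm]⟩

/-- The flag-transitive group. -/
noncomputable def group : Subgroup (Equiv.Perm (Fin 45)) where
  toSubmonoid := monoid
  inv_mem' {g} hg := by
    have : g⁻¹ ∈ Submonoid.powers g :=
      (mem_powers_iff_mem_zpowers (x := g)).2 (inv_mem (Subgroup.mem_zpowers g))
    exact (Submonoid.powers_le.2 hg) this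

theorem card_group : Nat.card group = 3240 := by
  let φ : (Plane × Plane) × ZMod 5 × Fin 8 → group := fun p =>
    ⟨perm p.1 p.2.1 p.2.2, p.1, p.2.1, p.2.2, rfl⟩
  have hφ : Function.Bijective φ := by
    constructor
    · rintro ⟨s, i, m⟩ ⟨t, j, n⟩ h
      have h' : perm s i m = perm t j n := congrArg Subtype.val h
      obtain ⟨rfl, rfl, rfl⟩ := act_param_injective (s := s) (t := t) (i := i) (j := j)
        (m := m) (n := n) fun q => by
          have := label_perm s i m (label.symm q)
          rw [h', label_perm] at this
          simpa using this.symm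
      rfl
    · rintro ⟨_, s, j, k, rfl⟩
      refine ⟨(s, j, ⟨k % 8, Nat.mod_lt _ (by norm_num)⟩), Subtype.ext ?_⟩
      exact Equiv.ext fun x => label.injective <| by
        simp only [φ, label_perm, act_mod_eight]
  rw [← Nat.card_congr (Equiv.ofBijective φ hφ), Nat.card_eq_fintype_card]
  simp

theorem image_block (s : Plane × Plane) (j : ZMod 5) (k : ℕ) (b : Pt) :
    (block b).image (perm s j k) = block (blockAct s j k b) := by
  ext x
  obtain ⟨y, rfl⟩ := (perm s j k).surjective x
  rw [(perm s j k).injective.mem_finset_image, mem_block, mem_block, label_perm, inc_act]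

theorem isAutGroup : IsAutGroup design group := by
  rintro g ⟨s, j, k, rfl⟩ B hB
  obtain ⟨b, rfl⟩ := mem_blocks.1 hB
  exact mem_blocks.2 ⟨_, (image_block s j k b).symm⟩

theorem exists_mem_group_of_mem_block {x : Fin 45} {b : Pt} (h : x ∈ block b) :
    ∃ g ∈ group, g (label.symm (1, 0)) = x ∧ (block (0, 0)).image g = block b := by
  obtain ⟨s, j, k, hq, hb⟩ := exists_act_of_inc b (label x) (mem_block.1 h)
  refine ⟨perm s j k, ⟨s, j, k, rfl⟩, label.injective ?_, ?_⟩
  · rw [label_perm, Equiv.apply_symm_apply, hq]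
  · rw [image_block, hb]

theorem flagTransitive : FlagTransitive design group := by
  intro x₁ x₂ B₁ B₂ hB₁ hB₂ h₁ h₂
  obtain ⟨b₁, rfl⟩ := mem_blocks.1 hB₁
  obtain ⟨b₂, rfl⟩ := mem_blocks.1 hB₂
  obtain ⟨g₁, hg₁, hx₁, hb₁⟩ := exists_mem_group_of_mem_block h₁
  obtain ⟨g₂, hg₂, hx₂, hb₂⟩ := exists_mem_group_of_mem_block h₂
  refine ⟨g₂ * g₁⁻¹, mul_mem hg₂ (inv_mem hg₁), ?_, ?_⟩
  · rw [← hx₁, ← hx₂]; simp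
  · rw [← hb₁, ← hb₂, Finset.image_image]
    congr 1
    ext z
    simp

theorem exists_mem_group_apply_eq (x y : Fin 45) : ∃ g ∈ group, g x = y := by
  have hblock : ∀ q : Pt, ∃ b, Inc b q := by decide +kernel
  obtain ⟨b, hb⟩ := hblock (label x)
  obtain ⟨c, hc⟩ := hblock (label y)
  obtain ⟨g, hg, hxy, -⟩ := flagTransitive x y _ _ (mem_blocks.2 ⟨b, rfl⟩)
    (mem_blocks.2 ⟨c, rfl⟩) (mem_block.2 hb) (mem_block.2 hc)
  exact ⟨g, hg, hxy⟩

/-- The class of points lying in one of the five planes. -/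
noncomputable def planeClass (i : ZMod 5) : Finset (Fin 45) :=
  Finset.univ.filter fun x => (label x).1 = i

theorem mem_planeClass {i : ZMod 5} {x : Fin 45} : x ∈ planeClass i ↔ (label x).1 = i := by
  simp [planeClass]

theorem planeClass_injective : Function.Injective planeClass := fun i j h => by
  simpa [mem_planeClass] using Finset.ext_iff.1 h (label.symm (i, 0))

theorem card_planeClass (i : ZMod 5) : (planeClass i).card = 9 := by
  have h : ∀ i : ZMod 5, (Finset.univ.filter fun q : Pt => q.1 = i).card = 9 := by
    decide +kernel
  rw [← h i]
  exact Finset.card_equiv label fun x => by simp [mem_planeClass]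

theorem act_fst_eq_iff (s : Plane × Plane) (j : ZMod 5) (k : ℕ) (p q : Pt) :
    (act s j k p).1 = (act s j k q).1 ↔ p.1 = q.1 := by
  simp only [act, trans, rot, add_left_inj]
  induction k with
  | zero => rfl
  | succ k ih => simp only [Function.iterate_succ_apply', twist, two_mul_inj, ih]

theorem image_planeClass (s : Plane × Plane) (j : ZMod 5) (k : ℕ) (i : ZMod 5) :
    (planeClass i).image (perm s j k) = planeClass (act s j k (i, 0)).1 := by
  ext x
  obtain ⟨y, rfl⟩ := (perm s j k).surjective x
  rw [(perm s j k).injective.mem_finset_image, mem_planeClass, mem_planeClass, label_perm,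
    act_fst_eq_iff]

end Design45

open Design45 in
/-- Example 2.4 of the paper: there exists a nontrivial symmetric `(45,12,3)` design
together with a group `G` of automorphisms of order `3240` which is flag-transitive and
point-imprimitive: `G` is transitive on points and flags and leaves invariant a
nontrivial partition of the 45 points into 5 classes of size 9. -/
theorem exists_flagTransitive_imprimitive_45_12_3 :
    ∃ (D : SymmetricDesign (Fin 45) 45 12 3) (G : Subgroup (Equiv.Perm (Fin 45))),
      IsAutGroup D G ∧
      Nat.card G = 3240 ∧
      FlagTransitive D G ∧
      (∀ p q : Fin 45, ∃ g ∈ G, g p = q) ∧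
      ∃ C : Finset (Finset (Fin 45)),
        C.card = 5 ∧
        (∀ Δ ∈ C, Δ.card = 9) ∧
        (∀ p : Fin 45, ∃! Δ : Finset (Fin 45), Δ ∈ C ∧ p ∈ Δ) ∧
        (∀ g ∈ G, ∀ Δ ∈ C, Δ.image (g : Fin 45 → Fin 45) ∈ C) := by
  refine ⟨design, group, isAutGroup, card_group, flagTransitive, exists_mem_group_apply_eq,
    Finset.univ.image planeClass, ?_, ?_, fun p => ?_, ?_⟩
  · rw [Finset.card_image_of_injective _ planeClass_injective]; rfl
  · intro Δ hΔ
    obtain ⟨i, -, rfl⟩ := Finset.mem_image.1 hΔ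
    exact card_planeClass i
  · refine ⟨planeClass (label p).1, ⟨by simp, mem_planeClass.2 rfl⟩, ?_⟩
    rintro Δ ⟨hΔ, hp⟩
    obtain ⟨i, -, rfl⟩ := Finset.mem_image.1 hΔ
    rw [mem_planeClass.1 hp]
  · rintro g ⟨s, j, k, rfl⟩ Δ hΔ
    obtain ⟨i, -, rfl⟩ := Finset.mem_image.1 hΔ
    rw [image_planeClass]
    exact Finset.mem_image_of_mem _ (Finset.mem_univ _)
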